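/- arXiv:2211.14910 — 2 statements merged into one kernel-verified Lean document; each statement's English description precedes it below -/
import Mathlib

section
/- Let G be a finite group and H a subgroup attaining the maximum Chermak–Delgado measure of G. Then a subgroup K ≤ H attains the maximum Chermak–Delgado measure of H if and only if Z(H) ≤ K and K attains the maximum Chermak–Delgado measure of G. -/
/-- The Chermak–Delgado measure of a subgroup. -/
noncomputable def cdMeasure {G : Type*} [Group G] (H : Subgroup G) : ℕ :=
  Nat.card H * Nat.card (Subgroup.centralizer (H : Set G))

namespace Subgroup

variable {G : Type*} [Group G]

theorem card_mul_card_le_card_inf_mul_card [Finite G] {A B C : Subgroup G}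
    (hA : A ≤ C) (hB : B ≤ C) :
    Nat.card A * Nat.card B ≤ Nat.card (A ⊓ B : Subgroup G) * Nat.card C := by
  have hrel : A.relIndex B ≤ A.relIndex C :=
    relIndex_le_of_le_right hB (index_ne_zero_of_finite (H := A.subgroupOf C))
  have h₁ : Nat.card (A ⊓ B : Subgroup G) * A.relIndex B = Nat.card B := by
    rw [← inf_relIndex_right, ← relIndex_bot_left, ← relIndex_bot_left B,
      relIndex_mul_relIndex _ _ _ bot_le inf_le_right]
  have h₂ : Nat.card A * A.relIndex C = Nat.card C := by
    rw [← relIndex_bot_left, ← relIndex_bot_left C, relIndex_mul_relIndex _ _ _ bot_le hA]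
  calc Nat.card A * Nat.card B
      = Nat.card (A ⊓ B : Subgroup G) * (Nat.card A * A.relIndex B) := by rw [← h₁]; ring
    _ ≤ Nat.card (A ⊓ B : Subgroup G) * (Nat.card A * A.relIndex C) := by gcongr
    _ = _ := by rw [h₂]

theorem card_subgroupOf_of_le {H K : Subgroup G} (hKH : K ≤ H) :
    Nat.card (K.subgroupOf H) = Nat.card K :=
  Nat.card_congr (subgroupOfEquivOfLe hKH).toEquiv

theorem centralizer_subgroupOf {H K : Subgroup G} (hKH : K ≤ H) :
    centralizer (K.subgroupOf H : Set H) = (centralizer (K : Set G) ⊓ H).subgroupOf H := by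
  ext x
  simp only [mem_centralizer_iff, mem_subgroupOf, mem_inf, SetLike.mem_coe, Subtype.forall,
    Subtype.ext_iff, coe_mul, SetLike.coe_mem, and_true]
  exact ⟨fun h k hk => h k (hKH hk) hk, fun h k _ hk => h k hk⟩

theorem center_eq_subgroupOf (H : Subgroup G) :
    center H = (centralizer (H : Set G) ⊓ H).subgroupOf H := by
  rw [← centralizer_subgroupOf le_rfl, subgroupOf_self, coe_top, centralizer_univ]

end Subgroup

section ChermakDelgado

open Subgroup

variable {G : Type*} [Group G]

theorem cdMeasure_subgroupOf {H K : Subgroup G} (hKH : K ≤ H) :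
    cdMeasure (K.subgroupOf H) =
      Nat.card K * Nat.card (centralizer (K : Set G) ⊓ H : Subgroup G) := by
  rw [cdMeasure, centralizer_subgroupOf hKH, card_subgroupOf_of_le hKH,
    card_subgroupOf_of_le inf_le_right]

/-- Passing from `H` to the whole group multiplies the measure by at least `|C(H)| / |Z(H)|`. -/
theorem cdMeasure_subgroupOf_mul_le [Finite G] {H K : Subgroup G} (hKH : K ≤ H) :
    cdMeasure (K.subgroupOf H) * Nat.card (centralizer (H : Set G)) ≤
      cdMeasure K * Nat.card (centralizer (H : Set G) ⊓ H : Subgroup G) := by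
  have hC : centralizer (H : Set G) ≤ centralizer (K : Set G) := centralizer_le hKH
  have h := card_mul_card_le_card_inf_mul_card
    (inf_le_left : centralizer (K : Set G) ⊓ H ≤ centralizer (K : Set G)) hC
  have hinf : centralizer (K : Set G) ⊓ H ⊓ centralizer (H : Set G) =
      centralizer (H : Set G) ⊓ H := by
    rw [inf_right_comm, inf_eq_right.mpr hC]
  rw [hinf] at h
  rw [cdMeasure_subgroupOf hKH, cdMeasure]
  nlinarith [Nat.mul_le_mul_left (Nat.card K) h]

theorem cdMeasure_le_cdMeasure_top [Finite G] {H : Subgroup G}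
    (hH : ∀ K : Subgroup G, cdMeasure K ≤ cdMeasure H) (J : Subgroup H) :
    cdMeasure J ≤ Nat.card H * Nat.card (centralizer (H : Set G) ⊓ H : Subgroup G) := by
  obtain ⟨L, hL, rfl⟩ : ∃ L ≤ H, L.subgroupOf H = J :=
    ⟨J.map H.subtype, map_subtype_le J, comap_map_eq_self_of_injective H.subtype_injective J⟩
  refine Nat.le_of_mul_le_mul_right ?_ (Nat.card_pos (α := centralizer (H : Set G)))
  calc _ ≤ _ := cdMeasure_subgroupOf_mul_le hL
    _ ≤ cdMeasure H * _ := Nat.mul_le_mul_right _ (hH L)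
    _ = _ := by rw [cdMeasure]; ring

theorem center_le_of_cdMeasure_le [Finite G] {K : Subgroup G}
    (hK : ∀ J : Subgroup G, cdMeasure J ≤ cdMeasure K) : center G ≤ K := by
  have hc : centralizer (K : Set G) ≤ centralizer ((K ⊔ center G : Subgroup G) : Set G) := by
    rw [le_centralizer_iff]
    exact sup_le (le_centralizer_iff.mp le_rfl) (center_le_centralizer _)
  have hcard : Nat.card (K ⊔ center G : Subgroup G) ≤ Nat.card K := by
    refine Nat.le_of_mul_le_mul_right ?_ (Nat.card_pos (α := centralizer (K : Set G)))
    exact (Nat.mul_le_mul_left _ (card_le_of_le hc)).trans (hK _)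
  exact le_sup_right.trans (eq_of_le_of_card_ge le_sup_left hcard).ge

end ChermakDelgado

theorem cd_of_cd_member
    (G : Type*) [Group G] [Finite G] (H : Subgroup G)
    (hH : ∀ K : Subgroup G, cdMeasure K ≤ cdMeasure H)
    (K : Subgroup G) (hKH : K ≤ H) :
    (∀ J : Subgroup H, cdMeasure J ≤ cdMeasure (K.subgroupOf H)) ↔
      (Subgroup.center H ≤ K.subgroupOf H ∧
        ∀ J : Subgroup G, cdMeasure J ≤ cdMeasure K) := by
  constructor
  · intro hK
    refine ⟨center_le_of_cdMeasure_le hK, fun J => (hH J).trans ?_⟩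
    have htop := hK (H.subgroupOf H)
    rw [cdMeasure_subgroupOf le_rfl] at htop
    refine Nat.le_of_mul_le_mul_right ?_
      (Nat.card_pos (α := (Subgroup.centralizer (H : Set G) ⊓ H : Subgroup G)))
    calc _ = Nat.card H * Nat.card (Subgroup.centralizer (H : Set G) ⊓ H : Subgroup G) *
          Nat.card (Subgroup.centralizer (H : Set G)) := by rw [cdMeasure]; ring
      _ ≤ _ := Nat.mul_le_mul_right _ htop
      _ ≤ _ := cdMeasure_subgroupOf_mul_le hKH
  · rintro ⟨hZK, hK⟩ J
    refine (cdMeasure_le_cdMeasure_top hH J).trans ?_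
    rw [cdMeasure_subgroupOf hKH]
    rw [Subgroup.center_eq_subgroupOf] at hZK
    set Z := Subgroup.centralizer (H : Set G) ⊓ H
    set D := Subgroup.centralizer (K : Set G)
    have hZ : Z ≤ K := fun x hx => hZK (x := ⟨x, hx.2⟩) hx
    have hprod := Subgroup.card_mul_card_le_card_inf_mul_card
      (Subgroup.centralizer_le hZ : D ≤ Subgroup.centralizer (Z : Set G))
      (Subgroup.le_centralizer_iff.mp inf_le_left : H ≤ Subgroup.centralizer (Z : Set G))
    have hmax := hK Z
    refine Nat.le_of_mul_le_mul_right ?_ (Nat.card_pos (α := D))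
    calc Nat.card H * Nat.card Z * Nat.card D
        = Nat.card Z * (Nat.card D * Nat.card H) := by ring
      _ ≤ Nat.card Z * (Nat.card (D ⊓ H : Subgroup G) *
          Nat.card (Subgroup.centralizer (Z : Set G))) := Nat.mul_le_mul_left _ hprod
      _ = Nat.card (D ⊓ H : Subgroup G) * cdMeasure Z := by rw [cdMeasure]; ring
      _ ≤ Nat.card (D ⊓ H : Subgroup G) * cdMeasure K := Nat.mul_le_mul_left _ hmax
      _ = Nat.card K * Nat.card (D ⊓ H : Subgroup G) * Nat.card D := by rw [cdMeasure]; ring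
end

section
/- Let G be a finite group such that the identity subgroup, G itself, and a normal Sylow 3-subgroup H₃ of order 3 behave as follows: the Sylow 2-subgroups of G have order 2, G is not nilpotent, and exactly five subgroups of G fail to attain the maximum Chermak–Delgado measure. Then G is isomorphic to the symmetric group S₃. More precisely: if G is a finite non-nilpotent group with δ_CD(G) = 5, then G ≅ S₃. -/
open scoped Pointwise

/-- A subgroup belongs to the Chermak–Delgado lattice if its measure is maximal. -/
def IsCD {G : Type*} [Group G] (H : Subgroup G) : Prop :=
  ∀ K : Subgroup G, cdMeasure K ≤ cdMeasure H

section CDLattice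

variable {G : Type*} [Group G]

theorem Subgroup.card_mul_mul_card_inf (H K : Subgroup G) :
    Nat.card (H * K : Set G) * Nat.card (H ⊓ K : Subgroup G) = Nat.card H * Nat.card K := by
  have horb : ((↑) : G → G ⧸ K) '' (H : Set G) = MulAction.orbit H ((1 : G) : G ⧸ K) := by
    ext x
    simp only [Set.mem_image, SetLike.mem_coe, MulAction.mem_orbit_iff, Subtype.exists]
    constructor
    · rintro ⟨g, hg, rfl⟩
      exact ⟨g, hg, congrArg _ (mul_one g)⟩
    · rintro ⟨g, hg, rfl⟩
      exact ⟨g, hg, congrArg _ (mul_one g).symm⟩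
  have hstab : MulAction.stabilizer H ((1 : G) : G ⧸ K) = (H ⊓ K).subgroupOf H := by
    ext x
    rw [MulAction.mem_stabilizer_iff, eq_comm]
    change (((1 : G) : G ⧸ K) = ((x : G) * 1 : G)) ↔ _
    simp [QuotientGroup.eq, Subgroup.mem_subgroupOf]
  have hidx := Subgroup.index_mul_card ((H ⊓ K).subgroupOf H)
  rw [← hstab, MulAction.index_stabilizer, ← horb, hstab,
    Nat.card_congr (Subgroup.subgroupOfEquivOfLe (inf_le_left : H ⊓ K ≤ H)).toEquiv] at hidx
  rw [Subgroup.card_mul_eq_card_subgroup_mul_card_quotient, mul_assoc, ← hidx, mul_comm,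
    Nat.card_coe_set_eq]

theorem IsCD.cdMeasure_eq {H K : Subgroup G} (hH : IsCD H) (hK : IsCD K) :
    cdMeasure H = cdMeasure K :=
  le_antisymm (hK H) (hH K)

theorem cdMeasure_bot : cdMeasure (⊥ : Subgroup G) = Nat.card G := by
  have : Subgroup.centralizer ((⊥ : Subgroup G) : Set G) = ⊤ :=
    Subgroup.centralizer_eq_top_iff_subset.2 (bot_le (a := Subgroup.center G))
  rw [cdMeasure, this, Subgroup.card_bot, one_mul, Subgroup.card_top]

theorem cdMeasure_top :
    cdMeasure (⊤ : Subgroup G) = Nat.card G * Nat.card (Subgroup.center G) := by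
  rw [cdMeasure, Subgroup.coe_top, Subgroup.centralizer_univ, Subgroup.card_top]

theorem Subgroup.card_dvd_card_centralizer (H : Subgroup G) [IsMulCommutative H] :
    Nat.card H ∣ Nat.card (Subgroup.centralizer (H : Set G)) :=
  Subgroup.card_dvd_of_le H.le_centralizer

variable [Finite G]

theorem cdMeasure_pos (H : Subgroup G) : 0 < cdMeasure H :=
  Nat.mul_pos Nat.card_pos Nat.card_pos

theorem Subgroup.card_mul_le_card_sup (H K : Subgroup G) :
    Nat.card (H * K : Set G) ≤ Nat.card (H ⊔ K : Subgroup G) :=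
  Nat.card_mono (Set.toFinite _) (Set.mul_subset_iff.2 fun _ hx _ hy =>
    Subgroup.mul_mem_sup hx hy)

theorem IsCD.coe_sup {H K : Subgroup G} (hH : IsCD H) (hK : IsCD K) :
    ((H ⊔ K : Subgroup G) : Set G) = H * K := by
  set A := Subgroup.centralizer (H : Set G) with hA
  set B := Subgroup.centralizer (K : Set G) with hB
  have hAB : (A ⊓ B : Subgroup G) ≤ Subgroup.centralizer ((H ⊔ K : Subgroup G) : Set G) := by
    rw [Subgroup.le_centralizer_iff]
    exact sup_le (Subgroup.le_centralizer_iff.1 inf_le_left)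
      (Subgroup.le_centralizer_iff.1 inf_le_right)
  have hsup : (A ⊔ B : Subgroup G) ≤ Subgroup.centralizer ((H ⊓ K : Subgroup G) : Set G) :=
    sup_le (Subgroup.centralizer_le inf_le_left) (Subgroup.centralizer_le inf_le_right)
  have h1 := Subgroup.card_mul_mul_card_inf H K
  have h2 := Subgroup.card_mul_mul_card_inf A B
  have h3 : Nat.card (A * B : Set G) ≤
      Nat.card (Subgroup.centralizer ((H ⊓ K : Subgroup G) : Set G)) :=
    (Subgroup.card_mul_le_card_sup A B).trans (Subgroup.card_le_of_le hsup)
  have h4 := Subgroup.card_le_of_le hAB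
  have h5 := hH (H ⊔ K)
  have h6 := hK (H ⊓ K)
  have h7 := Nat.mul_le_mul (Subgroup.card_mul_le_card_sup H K) h4
  have hpos : 0 < cdMeasure (H ⊓ K) := cdMeasure_pos _
  have hmul : cdMeasure H * cdMeasure K ≤
      (Nat.card (H * K : Set G) * Nat.card (A ⊓ B : Subgroup G)) * cdMeasure (H ⊓ K) := by
    calc cdMeasure H * cdMeasure K
        = (Nat.card H * Nat.card K) * (Nat.card A * Nat.card B) := by
          simp only [cdMeasure, ← hA, ← hB]; ring
      _ = (Nat.card (H * K : Set G) * Nat.card (A ⊓ B : Subgroup G)) *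
          (Nat.card (H ⊓ K : Subgroup G) * Nat.card (A * B : Set G)) := by
          rw [← h1, ← h2]; ring
      _ ≤ _ := Nat.mul_le_mul_left _ (Nat.mul_le_mul_left _ h3)
  have h8 : cdMeasure H ≤ Nat.card (H * K : Set G) * Nat.card (A ⊓ B : Subgroup G) :=
    Nat.le_of_mul_le_mul_right (hmul.trans (Nat.mul_le_mul_left _ h6)) (cdMeasure_pos K)
  have h9 : Nat.card (H ⊔ K : Subgroup G) ≤ Nat.card (H * K : Set G) := by
    have : Nat.card (H ⊔ K : Subgroup G) * Nat.card (A ⊓ B : Subgroup G) ≤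
        Nat.card (H * K : Set G) * Nat.card (A ⊓ B : Subgroup G) :=
      (Nat.mul_le_mul_left _ h4).trans (h5.trans h8)
    exact Nat.le_of_mul_le_mul_right this Nat.card_pos
  refine (Set.eq_of_subset_of_ncard_le (Set.mul_subset_iff.2 fun _ hx _ hy =>
    Subgroup.mul_mem_sup hx hy) ?_ (Set.toFinite _)).symm
  rw [← Nat.card_coe_set_eq, ← Nat.card_coe_set_eq]
  exact h9

theorem IsCD.map {H : Subgroup G} (hH : IsCD H) (e : G ≃* G) : IsCD (H.map e.toMonoidHom) := by
  intro K
  refine (hH K).trans (Nat.mul_le_mul ?_ ?_)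
  · exact (Nat.card_congr (H.equivMapOfInjective e.toMonoidHom e.injective).toEquiv).le
  · rw [Nat.card_congr (Subgroup.equivMapOfInjective _ e.toMonoidHom e.injective).toEquiv]
    exact Subgroup.card_le_of_le (Subgroup.map_centralizer_le_centralizer_image _ _)

theorem IsCD.sylow_normal {p : ℕ} [Fact p.Prime] (P : Sylow p G) {H : Subgroup G} (hH : IsCD H)
    (hPH : (P : Subgroup G) ≤ H) (hHN : H ≤ Subgroup.normalizer (P : Set G)) :
    (P : Subgroup G).Normal := by
  have key : ∀ g : G, g • P = P := by
    intro g
    have hK := hH.map (MulAut.conj g)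
    have hset := hK.coe_sup hH
    set K := H.map (MulAut.conj g).toMonoidHom with hKdef
    have hP1 : (P : Subgroup G) ≤ K ⊔ H := hPH.trans le_sup_right
    have hP2 : ((g • P : Sylow p G) : Subgroup G) ≤ K ⊔ H :=
      le_trans (Subgroup.map_mono hPH) le_sup_left
    obtain ⟨l, hl⟩ := MulAction.exists_smul_eq (K ⊔ H : Subgroup G) (P.subtype hP1)
      ((g • P).subtype hP2)
    rw [Sylow.smul_subtype] at hl
    replace hl := Sylow.subtype_injective hl
    have hl' : (l : G) ∈ (K * H : Set G) := hset ▸ l.2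
    obtain ⟨k, hk, h, hh, hkh⟩ := hl'
    obtain ⟨h', hh', rfl⟩ := hk
    have e1 : h • P = P := Sylow.smul_eq_iff_mem_normalizer.2 (hHN hh)
    have e2 : h' • P = P := Sylow.smul_eq_iff_mem_normalizer.2 (hHN hh')
    change (l : G) • P = g • P at hl
    rw [← hkh] at hl
    simp only [mul_smul, e1] at hl
    change (g * h' * g⁻¹) • P = g • P at hl
    have : g⁻¹ • P = P := by
      have := congrArg (fun Q => h'⁻¹ • g⁻¹ • Q) hl
      simp only [mul_smul, inv_smul_smul] at this
      rw [this, inv_smul_eq_iff, e2]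
    rw [inv_smul_eq_iff] at this
    exact this.symm
  rw [← Subgroup.normalizer_eq_top_iff, eq_top_iff]
  exact fun g _ => Sylow.smul_eq_iff_mem_normalizer.1 (key g)

end CDLattice

section Counting

variable {G : Type*} [Group G] {p : ℕ}

theorem Sylow.normalizer_injective :
    Function.Injective fun Q : Sylow p G => Subgroup.normalizer (Q : Set G) := by
  intro Q R h
  have hle : (Q : Subgroup G) ≤ R := by
    have h1 : (Q : Subgroup G) ≤ Subgroup.normalizer (R : Set G) :=
      Subgroup.le_normalizer.trans_eq h
    have h2 := Q.2.inf_normalizer_sylow R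
    exact inf_eq_left.1 (h2.symm.trans (inf_eq_left.2 h1))
  exact (Sylow.ext (Q.3 R.2 hle)).symm

variable [Finite G] [Fact p.Prime]

theorem Sylow.normal_of_normal (P Q : Sylow p G) (hQ : (Q : Subgroup G).Normal) :
    (P : Subgroup G).Normal := by
  have := Sylow.unique_of_normal Q hQ
  rwa [Subsingleton.elim P Q]

/-- The conjugates of a non-normal Sylow subgroup lie outside the Chermak–Delgado lattice. -/
theorem Sylow.card_add_ncard_le (h : Nat.card {H : Subgroup G // ¬ IsCD H} = 5)
    (P : Sylow p G) (hP : ¬ (P : Subgroup G).Normal) (S : Set (Subgroup G))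
    (hS : ∀ H ∈ S, ¬ IsCD H) (hcard : ∀ H ∈ S, Nat.card H ≠ Nat.card P) :
    Nat.card (Sylow p G) + S.ncard ≤ 5 := by
  have hdisj : Disjoint (Set.range fun Q : Sylow p G => (Q : Subgroup G)) S := by
    rw [Set.disjoint_left]
    rintro _ ⟨Q, rfl⟩ hQ
    exact hcard _ hQ (Nat.card_congr (Q.equiv P).toEquiv)
  have hrange : (Set.range fun Q : Sylow p G => (Q : Subgroup G)).ncard =
      Nat.card (Sylow p G) := by
    rw [← Nat.card_coe_set_eq]
    exact Nat.card_range_of_injective fun _ _ h => Sylow.ext h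
  rw [← hrange, ← Set.ncard_union_eq hdisj (Set.toFinite _) (Set.toFinite _), ← h]
  refine Set.ncard_le_ncard (t := {H : Subgroup G | ¬ IsCD H}) ?_ (Set.toFinite _)
  rintro H (⟨Q, rfl⟩ | hH)
  · exact fun hQ => hP (P.normal_of_normal Q (hQ.sylow_normal Q le_rfl Subgroup.le_normalizer))
  · exact hS H hH

theorem Sylow.normalizer_eq_self (h : Nat.card {H : Subgroup G // ¬ IsCD H} = 5)
    (P : Sylow p G) (hP : ¬ (P : Subgroup G).Normal) :
    Subgroup.normalizer (P : Set G) = P := by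
  by_contra hne
  have hcard : ∀ Q : Sylow p G, Nat.card (Subgroup.normalizer (Q : Set G)) =
      Nat.card (Subgroup.normalizer (P : Set G)) := by
    intro Q
    have h1 := (Subgroup.normalizer (Q : Set G)).index_mul_card
    have h2 := (Subgroup.normalizer (P : Set G)).index_mul_card
    rw [← Sylow.card_eq_index_normalizer] at h1 h2
    exact Nat.eq_of_mul_eq_mul_left Nat.card_pos (h1.trans h2.symm)
  have hle := P.card_add_ncard_le h hP
    (Set.range fun Q : Sylow p G => Subgroup.normalizer (Q : Set G)) (by
      rintro _ ⟨Q, rfl⟩ hQ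
      exact hP (P.normal_of_normal Q (hQ.sylow_normal Q Subgroup.le_normalizer le_rfl))) (by
      rintro _ ⟨Q, rfl⟩ hQ
      rw [hcard Q] at hQ
      exact hne (Subgroup.eq_of_le_of_card_ge Subgroup.le_normalizer hQ.le).symm)
  rw [← Nat.card_coe_set_eq, Nat.card_range_of_injective Sylow.normalizer_injective] at hle
  have hmod := card_sylow_modEq_one p G
  have hp := (Fact.out : p.Prime).two_le
  have hn : Nat.card (Sylow p G) ≤ 2 := by omega
  have hone : Nat.card (Sylow p G) = 1 := by
    have hpos : 0 < Nat.card (Sylow p G) := Nat.card_pos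
    interval_cases hc : Nat.card (Sylow p G)
    · rfl
    · have := (Nat.modEq_iff_dvd' one_le_two).1 hmod.symm
      exact absurd (Nat.le_of_dvd one_pos this) (by omega)
  have := (Nat.card_eq_one_iff_unique.1 hone).1
  exact hP P.normal_of_subsingleton

end Counting

section SylowCounts

variable {G : Type*} [Group G] [Finite G]

theorem card_sylow_two_ne_five (h : Nat.card {H : Subgroup G // ¬ IsCD H} = 5)
    (P : Sylow 2 G) (hP : ¬ (P : Subgroup G).Normal)
    (hG : Nat.card G = Nat.card (Sylow 2 G) * Nat.card P) : Nat.card (Sylow 2 G) ≠ 5 := by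
  intro hn
  rw [hn] at hG
  obtain ⟨k, hk⟩ := IsPGroup.iff_card.1 P.2
  have : Fact (Nat.Prime 5) := ⟨Nat.prime_five⟩
  have h5 : ¬ 5 ∣ Nat.card P := by
    rw [hk]
    exact fun h => absurd (Nat.prime_five.dvd_of_dvd_pow h) (by norm_num)
  obtain ⟨R, hR⟩ := Sylow.exists_subgroup_card_pow_prime (G := G) 5 (n := 1)
    (by rw [hG]; exact Dvd.intro _ rfl)
  rw [pow_one] at hR
  have hcd : ∀ H : Subgroup G, Nat.card H ≠ Nat.card P → IsCD H := by
    intro H hH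
    by_contra hcon
    have := P.card_add_ncard_le h hP {H} (by simpa using hcon) (by simpa using hH)
    rw [hn, Set.ncard_singleton] at this
    omega
  have hbot : IsCD (⊥ : Subgroup G) := hcd _ fun hc => hP <| by
    rw [Subgroup.card_bot] at hc
    rw [Subgroup.card_eq_one.1 hc.symm]
    infer_instance
  have hRcd : IsCD R := hcd R fun hc => h5 (by rw [← hc, hR])
  have heq := hbot.cdMeasure_eq hRcd
  have : IsCyclic R := isCyclic_of_prime_card hR
  obtain ⟨m, hm⟩ := R.card_dvd_card_centralizer
  rw [cdMeasure_bot, hG, cdMeasure, hm, hR] at heq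
  exact h5 ⟨m, by omega⟩

theorem card_sylow_three_ne_four (h : Nat.card {H : Subgroup G // ¬ IsCD H} = 5)
    (P : Sylow 3 G) (hP : ¬ (P : Subgroup G).Normal)
    (hG : Nat.card G = Nat.card (Sylow 3 G) * Nat.card P)
    (hZ : Subgroup.center G ≤ P) : Nat.card (Sylow 3 G) ≠ 4 := by
  intro hn
  rw [hn] at hG
  obtain ⟨k, hk⟩ := IsPGroup.iff_card.1 P.2
  have h2 : ¬ 2 ∣ Nat.card P := by
    rw [hk]
    exact fun h => absurd (Nat.prime_two.dvd_of_dvd_pow h) (by norm_num)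
  obtain ⟨Q, hQ⟩ := Sylow.exists_subgroup_card_pow_prime (G := G) 2 (n := 2)
    (by rw [hG]; exact Dvd.intro _ rfl)
  obtain ⟨T, hT⟩ := Sylow.exists_subgroup_card_pow_prime (G := Q) 2 (n := 1)
    (by rw [hQ]; norm_num)
  have : IsMulCommutative Q := IsPGroup.isMulCommutative_of_card_eq_prime_sq hQ
  have hT' : Nat.card (T.map Q.subtype) = 2 := by
    rw [← Nat.card_congr (T.equivMapOfInjective Q.subtype Q.subtype_injective).toEquiv, hT]
    norm_num
  have hTQ : T.map Q.subtype ≤ Q := Subgroup.map_subtype_le T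
  have hpair : ∀ H K : Subgroup G, Nat.card H ≠ Nat.card K → Nat.card H ≠ Nat.card P →
      Nat.card K ≠ Nat.card P → ¬ IsCD H → IsCD K := by
    intro H K hHK hHP hKP hH
    by_contra hK
    have := P.card_add_ncard_le h hP {H, K} (by simpa using ⟨hH, hK⟩) (by simpa using ⟨hHP, hKP⟩)
    rw [hn, Set.ncard_pair (fun e => hHK (by rw [e]))] at this
    omega
  have hbotP : Nat.card (⊥ : Subgroup G) ≠ Nat.card P := fun hc => hP <| by
    rw [Subgroup.card_bot] at hc
    rw [Subgroup.card_eq_one.1 hc.symm]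
    infer_instance
  have hQP : Nat.card Q ≠ Nat.card P := fun hc => h2 (by rw [← hc, hQ]; norm_num)
  have hTP : Nat.card (T.map Q.subtype) ≠ Nat.card P := fun hc => h2 (by rw [← hc, hT'])
  have hGP : Nat.card (⊤ : Subgroup G) ≠ Nat.card P := fun hc =>
    h2 (by rw [← hc, Subgroup.card_top, hG]; exact ⟨2 * Nat.card P, by ring⟩)
  have hPpos : 0 < Nat.card P := Nat.card_pos
  obtain ⟨m, hm⟩ := Q.card_dvd_card_centralizer
  by_cases hbot : IsCD (⊥ : Subgroup G)
  · have hQcd : ¬ IsCD Q := by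
      intro hQcd
      have heq := hbot.cdMeasure_eq hQcd
      rw [cdMeasure_bot, hG, cdMeasure, hm, hQ] at heq
      exact h2 ⟨2 * m, by omega⟩
    have hTcd := hpair Q _ (by rw [hQ, hT']; norm_num) hQP hTP hQcd
    have heq := hbot.cdMeasure_eq hTcd
    obtain ⟨l, hl⟩ : Nat.card Q ∣
        Nat.card (Subgroup.centralizer ((T.map Q.subtype : Subgroup G) : Set G)) :=
      Subgroup.card_dvd_of_le (Q.le_centralizer.trans (Subgroup.centralizer_le hTQ))
    rw [cdMeasure_bot, hG, cdMeasure, hl, hQ, hT'] at heq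
    exact h2 ⟨l, by omega⟩
  · have hQcd := hpair _ Q (by rw [hQ, Subgroup.card_bot]; norm_num) hbotP hQP hbot
    have hGcd := hpair _ ⊤ (by rw [Subgroup.card_top, Subgroup.card_bot, hG]; omega)
      hbotP hGP hbot
    have heq := hGcd.cdMeasure_eq hQcd
    rw [cdMeasure_top, hG, cdMeasure, hm, hQ, mul_assoc] at heq
    have hdvd : 2 ∣ Nat.card P * Nat.card (Subgroup.center G) := ⟨2 * m, by omega⟩
    rcases Nat.prime_two.dvd_mul.1 hdvd with hd | hd
    · exact h2 hd
    · exact h2 (hd.trans (Subgroup.card_dvd_of_le hZ))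

theorem nonempty_mulEquiv_perm_fin_three (P : Subgroup G) (hG : Nat.card G = 6)
    (hcard : Nat.card P = 2) (hP : ¬ P.Normal) : Nonempty (G ≃* Equiv.Perm (Fin 3)) := by
  have hindex : Nat.card (G ⧸ P) = 3 := by
    have := P.card_eq_card_quotient_mul_card_subgroup
    rw [hG, hcard] at this
    omega
  have hcore : P.normalCore = ⊥ := by
    have hdvd := Subgroup.card_dvd_of_le P.normalCore_le
    rw [hcard, Nat.dvd_prime Nat.prime_two] at hdvd
    rcases hdvd with h1 | h1
    · exact Subgroup.card_eq_one.1 h1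
    · refine absurd ?_ hP
      rw [← Subgroup.eq_of_le_of_card_ge P.normalCore_le (by rw [h1, hcard])]
      infer_instance
  rw [Subgroup.normalCore_eq_ker] at hcore
  have hinj := (MonoidHom.ker_eq_bot_iff _).1 hcore
  have hbij : Function.Bijective (MulAction.toPermHom G (G ⧸ P)) := by
    rw [Nat.bijective_iff_injective_and_card]
    refine ⟨hinj, ?_⟩
    rw [Nat.card_perm, hindex, hG]
    rfl
  exact ⟨(MulEquiv.ofBijective _ hbij).trans
    (Finite.equivFinOfCardEq hindex).permCongrHom⟩

theorem Subgroup.index_centralizer_dvd_totient (R : Subgroup G) [R.Normal] [IsCyclic R] :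
    (Subgroup.centralizer (R : Set G)).index ∣ (Nat.card R).totient := by
  have hker : (MulAut.conjNormal : G →* MulAut R).ker = Subgroup.centralizer (R : Set G) := by
    ext g
    rw [MonoidHom.mem_ker, Subgroup.mem_centralizer_iff, MulEquiv.ext_iff]
    constructor
    · intro hg x hx
      have := congrArg Subtype.val (hg ⟨x, hx⟩)
      rw [MulAut.conjNormal_apply, mul_inv_eq_iff_eq_mul] at this
      exact this.symm
    · intro hg x
      apply Subtype.ext
      rw [MulAut.conjNormal_apply, mul_inv_eq_iff_eq_mul]
      exact (hg x x.2).symm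
  rw [← hker, Subgroup.index_ker, ← IsCyclic.card_mulAut]
  exact Subgroup.card_subgroup_dvd_card _

theorem Sylow.card_three_of_card_eq_three_mul {c : ℕ} (hG : Nat.card G = 3 * c)
    (hc : ¬ 3 ∣ c) (R : Sylow 3 G) : Nat.card R = 3 := by
  obtain ⟨j, hj⟩ := IsPGroup.iff_card.1 R.2
  have h3 : 3 ∣ Nat.card R := R.dvd_card_of_dvd_card (by rw [hG]; exact Dvd.intro _ rfl)
  have hdvd := Subgroup.card_subgroup_dvd_card (R : Subgroup G)
  rw [hG] at hdvd
  match j with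
  | 0 => rw [hj] at h3; norm_num at h3
  | 1 => rw [hj]; norm_num
  | j + 2 =>
    rw [hj, pow_succ' 3 (j + 1), mul_dvd_mul_iff_left (by norm_num), pow_succ'] at hdvd
    exact absurd (dvd_of_mul_right_dvd hdvd) hc

theorem card_sylow_two_eq_two (h : Nat.card {H : Subgroup G // ¬ IsCD H} = 5)
    (P : Sylow 2 G) (hP : ¬ (P : Subgroup G).Normal)
    (hG : Nat.card G = Nat.card (Sylow 2 G) * Nat.card P)
    (hZ : Subgroup.center G ≤ P) (hn : Nat.card (Sylow 2 G) = 3) : Nat.card P = 2 := by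
  by_contra hne
  rw [hn] at hG
  obtain ⟨k, hk⟩ := IsPGroup.iff_card.1 P.2
  have : Fact (Nat.Prime 3) := ⟨Nat.prime_three⟩
  have h3 : ¬ 3 ∣ Nat.card P := by
    rw [hk]
    exact fun h => absurd (Nat.prime_three.dvd_of_dvd_pow h) (by norm_num)
  have hP1 : Nat.card P ≠ 1 := fun hc => hP <| by
    rw [Subgroup.card_eq_one.1 hc]
    infer_instance
  have hPpos : 0 < Nat.card P := Nat.card_pos
  have h2 : 2 ∣ Nat.card P := by
    rw [hk]
    exact dvd_pow_self 2 (fun h0 => hP1 (by rw [hk, h0, pow_zero]))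
  have h3Z : ¬ 3 ∣ Nat.card (Subgroup.center G) := fun hd =>
    h3 (hd.trans (Subgroup.card_dvd_of_le hZ))
  obtain ⟨T, hT⟩ := Sylow.exists_subgroup_card_pow_prime (G := G) 2 (n := 1)
    (by rw [hG, pow_one]; exact h2.mul_left 3)
  rw [pow_one] at hT
  let R : Sylow 3 G := default
  have hRcard := fun R : Sylow 3 G => Sylow.card_three_of_card_eq_three_mul hG h3 R
  have hR : Nat.card R = 3 := hRcard R
  have hRnormal : (R : Subgroup G).Normal := by
    by_contra hRn
    have hle := P.card_add_ncard_le h hP (Set.range fun Q : Sylow 3 G => (Q : Subgroup G)) (by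
      rintro _ ⟨Q, rfl⟩ hQ
      exact hRn (R.normal_of_normal Q (hQ.sylow_normal Q le_rfl Subgroup.le_normalizer))) (by
      rintro _ ⟨Q, rfl⟩ hQ
      exact h3 (by rw [← hQ, hRcard Q]))
    rw [hn, ← Nat.card_coe_set_eq, Nat.card_range_of_injective fun _ _ h => Sylow.ext h] at hle
    have hmod : Nat.card (Sylow 3 G) % 3 = 1 := card_sylow_modEq_one 3 G
    have := (Nat.card_eq_one_iff_unique.1 (show Nat.card (Sylow 3 G) = 1 by omega)).1
    exact hRn R.normal_of_subsingleton
  have : IsCyclic (R : Subgroup G) := isCyclic_of_prime_card hR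
  have hidx := (R : Subgroup G).index_centralizer_dvd_totient
  rw [hR, Nat.totient_prime Nat.prime_three, Nat.dvd_prime Nat.prime_two] at hidx
  have hmulidx := (Subgroup.centralizer ((R : Subgroup G) : Set G)).index_mul_card
  rw [hG] at hmulidx
  have hidx2 : (Subgroup.centralizer ((R : Subgroup G) : Set G)).index = 2 := by
    refine hidx.resolve_left fun h1 => h3Z ?_
    rw [Subgroup.index_eq_one, Subgroup.centralizer_eq_top_iff_subset] at h1
    have := Subgroup.card_dvd_of_le (show (R : Subgroup G) ≤ Subgroup.center G from h1)
    rwa [hR] at this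
  rw [hidx2] at hmulidx
  set C := Subgroup.centralizer ((R : Subgroup G) : Set G) with hC
  have hmR : cdMeasure (R : Subgroup G) = 3 * Nat.card C := by rw [cdMeasure, hR]
  have hbot : ¬ IsCD (⊥ : Subgroup G) := by
    intro hb
    have := hb R
    rw [cdMeasure_bot, hG, hmR] at this
    omega
  have hRG : ¬ IsCD (R : Subgroup G) ∨ ¬ IsCD (⊤ : Subgroup G) := by
    by_contra! hcon
    have heq := hcon.1.cdMeasure_eq hcon.2
    rw [hmR, cdMeasure_top, hG, mul_assoc] at heq
    have hdvd : 3 ∣ Nat.card P * Nat.card (Subgroup.center G) := by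
      obtain ⟨m, hm⟩ := h2
      have hCm : Nat.card C = 3 * m := by omega
      have hPZ : Nat.card C = Nat.card P * Nat.card (Subgroup.center G) := by omega
      exact ⟨m, by omega⟩
    rcases Nat.prime_three.dvd_mul.1 hdvd with hd | hd
    · exact h3 hd
    · exact h3Z hd
  have hTcd : IsCD T := by
    have key : ∀ A : Subgroup G, ¬ IsCD A → 3 ∣ Nat.card A → IsCD T := by
      intro A hA hA3
      by_contra hTn
      have hAT : A ≠ T := by rintro rfl; rw [hT] at hA3; norm_num at hA3
      have hbA : (⊥ : Subgroup G) ≠ A := by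
        rintro rfl; rw [Subgroup.card_bot] at hA3; norm_num at hA3
      have hbT : (⊥ : Subgroup G) ≠ T := by
        rintro rfl; rw [Subgroup.card_bot] at hT; norm_num at hT
      have hle := P.card_add_ncard_le h hP {⊥, A, T} (by simpa using ⟨hbot, hA, hTn⟩) (by
        rintro H (rfl | rfl | rfl)
        · rw [Subgroup.card_bot]; exact hP1.symm
        · exact fun hc => h3 (hc ▸ hA3)
        · rw [hT]; exact fun hc => hne hc.symm)
      rw [hn, Set.ncard_eq_three.2 ⟨_, _, _, hbA, hbT, hAT, rfl⟩] at hle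
      omega
    rcases hRG with hA | hA
    · exact key _ hA (by rw [hR])
    · exact key _ hA (by rw [Subgroup.card_top, hG]; exact Dvd.intro _ rfl)
  have hmT : cdMeasure T = 2 * Nat.card (Subgroup.centralizer (T : Set G)) := by
    rw [cdMeasure, hT]
  have hTcent : Subgroup.centralizer (T : Set G) = ⊤ := by
    have hmul := (Subgroup.centralizer (T : Set G)).index_mul_card
    have hRT := hTcd R
    rw [hmR, hmT] at hRT
    rw [hG] at hmul
    rw [← Subgroup.index_eq_one]
    have hpos : (Subgroup.centralizer (T : Set G)).index ≠ 0 := Subgroup.index_ne_zero_of_finite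
    have hlt : (Subgroup.centralizer (T : Set G)).index < 2 := by
      by_contra! hge
      have := Nat.mul_le_mul_right (Nat.card (Subgroup.centralizer (T : Set G))) hge
      omega
    omega
  have h6 : 6 ≤ Nat.card (Subgroup.centralizer (C : Set G)) := by
    have hd3 : 3 ∣ Nat.card (Subgroup.centralizer (C : Set G)) := by
      have := Subgroup.card_dvd_of_le (show (R : Subgroup G) ≤ Subgroup.centralizer C from
        Subgroup.le_centralizer_iff.1 le_rfl)
      rwa [hR] at this
    have hd2 : 2 ∣ Nat.card (Subgroup.centralizer (C : Set G)) := by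
      have := Subgroup.card_dvd_of_le (show T ≤ Subgroup.centralizer C from
        Subgroup.le_centralizer_iff.1 (le_top.trans_eq hTcent.symm))
      rwa [hT] at this
    have hpos : 0 < Nat.card (Subgroup.centralizer (C : Set G)) := Nat.card_pos
    omega
  have hCT := hTcd C
  rw [hmT, hTcent, Subgroup.card_top, hG, cdMeasure] at hCT
  have := Nat.mul_le_mul_left (Nat.card C) h6
  omega

end SylowCounts

theorem s3_of_not_nilpotent_delta_cd_eq_five
    (G : Type*) [Group G] [Finite G] (hG : ¬ Group.IsNilpotent G)
    (h : Nat.card {H : Subgroup G //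
      ¬ ∀ K : Subgroup G, cdMeasure K ≤ cdMeasure H} = 5) :
    Nonempty (G ≃* Equiv.Perm (Fin 3)) := by
  change Nat.card {H : Subgroup G // ¬ IsCD H} = 5 at h
  have hsylow : ¬ ∀ (p : ℕ) (_ : Fact p.Prime) (P : Sylow p G), (P : Subgroup G).Normal :=
    fun hall => hG ((Group.isNilpotent_of_finite_tfae.out 0 3 rfl rfl).2 hall)
  push Not at hsylow
  obtain ⟨p, hp, P, hP⟩ := hsylow
  have hN := P.normalizer_eq_self h hP
  have hcard : Nat.card G = Nat.card (Sylow p G) * Nat.card P := by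
    rw [P.card_eq_index_normalizer, hN]
    exact (Subgroup.index_mul_card _).symm
  have hZ : Subgroup.center G ≤ P :=
    (Subgroup.center_le_centralizer _).trans ((Subgroup.centralizer_le_normalizer _).trans_eq hN)
  have hle := P.card_add_ncard_le h hP ∅ (by simp) (by simp)
  rw [Set.ncard_empty, add_zero] at hle
  have hne : Nat.card (Sylow p G) ≠ 1 := fun hone => by
    have := (Nat.card_eq_one_iff_unique.1 hone).1
    exact hP P.normal_of_subsingleton
  have hpos : 0 < Nat.card (Sylow p G) := Nat.card_pos
  have hdvd : p ∣ Nat.card (Sylow p G) - 1 :=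
    (Nat.modEq_iff_dvd' hpos).1 (card_sylow_modEq_one p G).symm
  have hple := Nat.le_of_dvd (by omega) hdvd
  have hp2 := hp.out.two_le
  have hp4 : p ≠ 4 := by
    rintro rfl
    exact absurd hp.out (by norm_num)
  obtain rfl | rfl : p = 2 ∨ p = 3 := by omega
  · have h5 := card_sylow_two_ne_five h P hP hcard
    have hn : Nat.card (Sylow 2 G) = 3 := by omega
    have hP2 := card_sylow_two_eq_two h P hP hcard hZ hn
    exact nonempty_mulEquiv_perm_fin_three P (by rw [hcard, hn, hP2]) hP2 hP
  · exact absurd (by omega) (card_sylow_three_ne_four h P hP hcard hZ)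
end
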